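/- Let γ ∈ (0,1/2) and let K be a convex body in R^n whose boundary ∂K has curvature bounded from above by C < ∞. Then s_γ(x) ≥ c_γ/(C√n) for every x ∈ ∂K, where c_γ > 0 is a constant depending only on γ and s_γ(x) = sup{ t ≥ 0 : vol((x + tB^n) ∩ K)/vol(tB^n) ≥ γ }. Equivalently, for t = c_γ/(C√n) one has vol((x + tB^n) ∩ K) ≥ γ vol(tB^n). -/

import Mathlib

/-!
Fix `x ∈ ∂K`, put `R = 1/C`, and let `B(z, R) ⊆ K` be the ball touching `∂K` at `x`, with unit
direction `e = (z - x)/R`. A point `x + u` with `‖u‖ ≤ t` and `⟪e, u⟫ ≥ t² / (2R)` lies in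
`B(z, R)`, hence in `K`. So it suffices to bound from below the volume of the cap
`{u ∈ t B : ⟪e, u⟫ ≥ d}` with `d = t² / (2R)` (`cap_real_ge`). By the symmetry `u ↦ -u` this
amounts to bounding the volume of the central slab `{|⟪e, u⟫| < d}` by `(1 - 2γ) vol (t B)`.

The slab bound (`slab_real_le`) is a packing argument: if `d ≤ t / (M √(8n))`, then the ball
contains `M` disjoint translates of a copy of the slab shrunk by `√(1 - 1/(2n))`, each having at
least half the volume of the slab. Hence the slab occupies at most the fraction `2 / M` of the
ball. Taking `M ≥ 2 / (1 - 2γ)` and `c_γ = 1 / (2M)` makes `t = c_γ R / √n` satisfy the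
requirement on `d`.
-/

open MeasureTheory Metric Filter
open scoped ENNReal NNReal InnerProductSpace Topology

noncomputable section

abbrev Euc (n : ℕ) := EuclideanSpace ℝ (Fin n)

def IsConvexBody {n : ℕ} (K : Set (Euc n)) : Prop :=
  Convex ℝ K ∧ IsCompact K ∧ (interior K).Nonempty

/-- The curvature of `∂K` is bounded above by `C`: at every boundary point there is a
ball of radius `1/C` inside `K` touching the boundary at that point (so the tangent
planes of the ball and of `K` coincide there). -/
def CurvatureBoundedBy {n : ℕ} (K : Set (Euc n)) (C : ℝ) : Prop :=
  ∀ x ∈ frontier K, ∃ z, closedBall z (1 / C) ⊆ K ∧ dist x z = 1 / C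

/-- `ν` is an inward unit normal field for `K` on `∂K`. -/
def IsInwardNormal {n : ℕ} (K : Set (Euc n)) (ν : Euc n → Euc n) : Prop :=
  ∀ x ∈ frontier K, ‖ν x‖ = 1 ∧ ∀ y ∈ K, 0 ≤ ⟪ν x, y - x⟫_ℝ

/-- Surface measure on `∂K`: the `(n-1)`-dimensional Hausdorff measure restricted to `∂K`. -/
def surf {n : ℕ} (K : Set (Euc n)) : Measure (Euc n) :=
  (μH[(n - 1 : ℝ)]).restrict (frontier K)

/-- Uniform probability distribution on `∂K`. -/
def unifBoundary {n : ℕ} (K : Set (Euc n)) : Measure (Euc n) :=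
  (surf K Set.univ)⁻¹ • surf K

/-- `cos φ_{xy}`: cosine of the (acute) angle between `y - x` and the inward normal at `x`. -/
def cosAngle {n : ℕ} (ν : Euc n → Euc n) (x y : Euc n) : ℝ :=
  ⟪ν x, y - x⟫_ℝ / ‖y - x‖

/-- `P` is the one-step transition kernel of the stochastic billiard chain on `∂K`:
`P_u(A) = (π^{(n-1)/2} / (vol(∂K) Γ((n+1)/2))) ∫_A cos(φ_{uv}) cos(φ_{vu}) / ‖u-v‖^{n-1} dv`. -/
def IsBilliardKernel {n : ℕ} (K : Set (Euc n)) (ν : Euc n → Euc n)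
    (P : Euc n → Measure (Euc n)) : Prop :=
  ∀ u ∈ frontier K, IsProbabilityMeasure (P u) ∧
    ∀ A : Set (Euc n), MeasurableSet A →
      P u A = ∫⁻ v in A, ENNReal.ofReal
        (Real.pi ^ (((n : ℝ) - 1) / 2) /
            (Real.Gamma (((n : ℝ) + 1) / 2) * (surf K Set.univ).toReal) *
          (cosAngle ν u v * cosAngle ν v u / ‖u - v‖ ^ (n - 1))) ∂(surf K)

/-- Total variation distance between two measures: `sup_A |μ₁(A) - μ₂(A)|`. -/
def tvDist {n : ℕ} (μ₁ μ₂ : Measure (Euc n)) : ℝ :=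
  ⨆ A : Set (Euc n), |(μ₁ A).toReal - (μ₂ A).toReal|

/-- The step-size functional
`s_γ(x) = sup{ t ≥ 0 : vol((x + tBⁿ) ∩ K) ≥ γ vol(tBⁿ) }`. -/
def sGamma {n : ℕ} (K : Set (Euc n)) (γ : ℝ) (x : Euc n) : ℝ :=
  sSup {t : ℝ | 0 ≤ t ∧
    ENNReal.ofReal γ * volume (closedBall (0 : Euc n) t) ≤ volume (closedBall x t ∩ K)}

open scoped Pointwise in
/-- A thin central slab of a ball has small volume: if its half-width `d` is at most
`t / (M √(8n))`, then its volume is at most `2 / M` times that of the ball of radius `t`.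
The slab is shrunk by `r = √(1 - 1/(2n))` and translated by `2kd` along `e`, for `k < M`.
The copies stay in the ball, are disjoint, and each keeps the fraction `r ^ n ≥ 1/2` of the
volume. -/
lemma slab_real_le {n : ℕ} (hn : 0 < n) (e : Euc n) (he : ‖e‖ = 1) (t d : ℝ) (ht : 0 < t)
    (hd : 0 < d) (M : ℕ) (h : 8 * M ^ 2 * n * d ^ 2 ≤ t ^ 2) :
    M * volume.real {u : Euc n | u ∈ closedBall 0 t ∧ |⟪e, u⟫_ℝ| < d} ≤
      2 * volume.real (closedBall (0 : Euc n) t) := by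
  have hn1 : (1 : ℝ) ≤ n := by exact_mod_cast hn
  have hn0 : (0 : ℝ) < n := by linarith
  set q : ℝ := 1 / (2 * n) with hq
  have hqn : 2 * n * q = 1 := by rw [hq]; field_simp
  have hq0 : 0 < q := by positivity
  have hq1 : q ≤ 1 / 2 := by nlinarith
  set r : ℝ := Real.sqrt (1 - q) with hr
  have hr2 : r ^ 2 = 1 - q := Real.sq_sqrt (by linarith)
  have hr0 : 0 ≤ r := Real.sqrt_nonneg _
  have hr1 : r ≤ 1 := by nlinarith
  -- Bernoulli's inequality applied to `r ^ (2n) = (1 - q) ^ n`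
  have hrn : 1 / 2 ≤ r ^ n := by
    have h1 : 1 + (n : ℝ) * (-q) ≤ (1 + (-q)) ^ n :=
      one_add_mul_le_pow (by linarith) n
    have h2 : (1 + (-q)) ^ n = r ^ n * r ^ n := by
      rw [← sub_eq_add_neg, ← hr2]; ring
    have h3 : r ^ n ≤ 1 := pow_le_one₀ hr0 hr1
    have h4 : 0 ≤ r ^ n := pow_nonneg hr0 n
    nlinarith
  set S : Set (Euc n) := {u : Euc n | u ∈ closedBall 0 t ∧ |⟪e, u⟫_ℝ| < d} with hS
  let T : ℕ → Set (Euc n) := fun k => {u | u ∈ closedBall 0 t ∧ |⟪e, u⟫_ℝ - 2 * k * d| < d}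
  have hTB : ∀ k, T k ⊆ closedBall 0 t := fun k u hu => hu.1
  have hBfin : volume (closedBall (0 : Euc n) t) ≠ ∞ := measure_closedBall_lt_top.ne
  have hTfin : ∀ k, volume (T k) ≠ ∞ := fun k => measure_ne_top_of_subset (hTB k) hBfin
  have hTm : ∀ k, MeasurableSet (T k) := by
    intro k
    apply measurableSet_closedBall.inter
    apply IsOpen.measurableSet
    have hc : Continuous fun u : Euc n => |⟪e, u⟫_ℝ - 2 * k * d| := by fun_prop
    exact isOpen_lt hc continuous_const
  have hdisj : (↑(Finset.range M) : Set ℕ).PairwiseDisjoint T := by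
    intro i _ j _ hij
    refine Set.disjoint_left.2 fun u hi hj => hij ?_
    have hi := abs_lt.1 hi.2
    have hj := abs_lt.1 hj.2
    have h1 : (i : ℝ) < j + 1 := by nlinarith
    have h2 : (j : ℝ) < i + 1 := by nlinarith
    have h1' : i < j + 1 := by exact_mod_cast h1
    have h2' : j < i + 1 := by exact_mod_cast h2
    omega
  have hT : ∀ k ∈ Finset.range M, 1 / 2 * volume.real S ≤ volume.real (T k) := by
    intro k hk
    have hkM : (k : ℝ) + 1 ≤ M := by exact_mod_cast Finset.mem_range.1 hk
    have hk0 : (0 : ℝ) ≤ k := Nat.cast_nonneg k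
    have hsub : (fun y => (2 * k * d) • e + y) '' (r • S) ⊆ T k := by
      rintro _ ⟨_, ⟨u, ⟨huB, hus⟩, rfl⟩, rfl⟩
      have hut : ‖u‖ ≤ t := by simpa using huB
      have hus' := abs_lt.1 hus
      simp only
      refine ⟨?_, ?_⟩
      · rw [mem_closedBall_zero_iff]
        apply le_of_sq_le_sq _ ht.le
        have e1 : ‖(2 * k * d) • e + r • u‖ ^ 2
            = (2 * k * d) ^ 2 + 2 * (2 * k * d * (r * ⟪e, u⟫_ℝ)) + r ^ 2 * ‖u‖ ^ 2 := by
          rw [norm_add_sq_real, norm_smul, norm_smul, real_inner_smul_left,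
            real_inner_smul_right, he, mul_pow, mul_pow, Real.norm_eq_abs, Real.norm_eq_abs,
            sq_abs, sq_abs]
          ring
        have e2 : r * ⟪e, u⟫_ℝ ≤ d := by nlinarith
        have e3 : 2 * k * d * (r * ⟪e, u⟫_ℝ) ≤ 2 * k * d * d :=
          mul_le_mul_of_nonneg_left e2 (by positivity)
        have e4 : r ^ 2 * ‖u‖ ^ 2 ≤ r ^ 2 * t ^ 2 := by gcongr
        have e5 : ((k : ℝ) ^ 2 + k) * d ^ 2 ≤ M ^ 2 * d ^ 2 := by
          gcongr
          nlinarith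
        have e6 : 4 * (M : ℝ) ^ 2 * d ^ 2 ≤ q * t ^ 2 := by
          have := mul_le_mul_of_nonneg_left h hq0.le
          have e7 : q * (8 * M ^ 2 * n * d ^ 2) = 4 * M ^ 2 * d ^ 2 * (2 * n * q) := by ring
          rw [e7, hqn] at this
          linarith
        rw [e1]
        rw [hr2] at e4 ⊢
        nlinarith
      · rw [inner_add_right, real_inner_smul_right, real_inner_smul_right,
          real_inner_self_eq_norm_sq, he]
        have e0 : 2 * k * d * 1 ^ 2 + r * ⟪e, u⟫_ℝ - 2 * k * d = r * ⟪e, u⟫_ℝ := by ring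
        rw [e0, abs_mul, abs_of_nonneg hr0]
        nlinarith [abs_nonneg ⟪e, u⟫_ℝ]
    have hvol : volume.real ((fun y => (2 * k * d) • e + y) '' (r • S)) = r ^ n * volume.real S := by
      rw [measureReal_def, Set.image_add_left, measure_preimage_add, Measure.addHaar_smul,
        ENNReal.toReal_mul, finrank_euclideanSpace_fin, abs_of_nonneg (pow_nonneg hr0 n),
        ENNReal.toReal_ofReal (pow_nonneg hr0 n), measureReal_def]
    calc 1 / 2 * volume.real S ≤ r ^ n * volume.real S := by gcongr
      _ ≤ volume.real (T k) := hvol ▸ measureReal_mono hsub (hTfin k)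
  have hsum : ∑ k ∈ Finset.range M, volume.real (T k) ≤ volume.real (closedBall (0 : Euc n) t) := by
    rw [← measureReal_biUnion_finset hdisj (fun k _ => hTm k) (fun k _ => hTfin k)]
    exact measureReal_mono (Set.iUnion₂_subset fun k _ => hTB k) hBfin
  have hlow := Finset.card_nsmul_le_sum _ _ _ hT
  rw [Finset.card_range, nsmul_eq_mul] at hlow
  linarith

open scoped Pointwise in
/-- For `d` as small as in `slab_real_le`, a cap cut off at distance `d` from the centre has volume
at least `γ` times that of the ball whenever `γ ≤ 1/2 - 1/M`, since the cap, its mirror image and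
the central slab cover the ball. -/
lemma cap_real_ge {n : ℕ} (hn : 0 < n) (e : Euc n) (he : ‖e‖ = 1) (t d : ℝ) (ht : 0 < t)
    (hd : 0 < d) (M : ℕ) (h : 8 * M ^ 2 * n * d ^ 2 ≤ t ^ 2) (γ : ℝ) (hM : 2 ≤ (1 - 2 * γ) * M) :
    γ * volume.real (closedBall (0 : Euc n) t) ≤
      volume.real {u : Euc n | u ∈ closedBall 0 t ∧ d ≤ ⟪e, u⟫_ℝ} := by
  have hslab := slab_real_le hn e he t d ht hd M h
  set S : Set (Euc n) := {u : Euc n | u ∈ closedBall 0 t ∧ |⟪e, u⟫_ℝ| < d}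
  set P : Set (Euc n) := {u : Euc n | u ∈ closedBall 0 t ∧ d ≤ ⟪e, u⟫_ℝ} with hP
  have hBfin : volume (closedBall (0 : Euc n) t) ≠ ∞ := measure_closedBall_lt_top.ne
  have hPfin : volume P ≠ ∞ := measure_ne_top_of_subset (fun u hu => hu.1) hBfin
  have hSfin : volume S ≠ ∞ := measure_ne_top_of_subset (fun u hu => hu.1) hBfin
  have hneg : volume.real (-P) = volume.real P := by
    rw [measureReal_def, Measure.measure_neg, measureReal_def]
  have hNfin : volume (-P) ≠ ∞ := by rwa [Measure.measure_neg]
  have hcover : closedBall (0 : Euc n) t ⊆ (P ∪ -P) ∪ S := by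
    intro u hu
    by_cases h1 : |⟪e, u⟫_ℝ| < d
    · exact Or.inr ⟨hu, h1⟩
    · left
      rcases le_abs.1 (not_lt.1 h1) with h2 | h2
      · exact Or.inl ⟨hu, h2⟩
      · refine Or.inr ⟨?_, ?_⟩
        · simpa using hu
        · rwa [inner_neg_right]
  have h1 : volume.real (closedBall (0 : Euc n) t) ≤ volume.real ((P ∪ -P) ∪ S) :=
    measureReal_mono hcover
      (measure_union_ne_top (measure_union_ne_top hPfin hNfin) hSfin)
  have h2 := measureReal_union_le (μ := (volume : Measure (Euc n))) (P ∪ -P) S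
  have h3 := measureReal_union_le (μ := (volume : Measure (Euc n))) P (-P)
  rw [hneg] at h3
  have hB0 : 0 ≤ volume.real (closedBall (0 : Euc n) t) := measureReal_nonneg
  have hM0 : (0 : ℝ) < M := by
    rcases Nat.eq_zero_or_pos M with h0 | h0
    · simp [h0] at hM; linarith
    · exact_mod_cast h0
  have hS1 : volume.real S ≤ (1 - 2 * γ) * volume.real (closedBall (0 : Euc n) t) := by
    refine le_of_mul_le_mul_left ?_ hM0
    nlinarith
  linarith

/-- The set whose supremum defines `sGamma` is bounded above, so that this supremum is not a
junk value. -/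
lemma bddAbove_sGamma {n : ℕ} (hn : 0 < n) (K : Set (Euc n)) (hK : IsCompact K) (γ : ℝ)
    (hγ : 0 < γ) (x : Euc n) :
    BddAbove {t : ℝ | 0 ≤ t ∧
      ENNReal.ofReal γ * volume (closedBall (0 : Euc n) t) ≤ volume (closedBall x t ∩ K)} := by
  set b := volume.real (closedBall (0 : Euc n) 1) with hb
  have hb0 : 0 < b := by
    rw [hb, measureReal_def]
    exact ENNReal.toReal_pos (measure_closedBall_pos _ _ one_pos).ne'
      measure_closedBall_lt_top.ne
  refine ⟨max 1 (volume.real K / (γ * b)), ?_⟩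
  rintro t ⟨ht0, ht⟩
  rcases le_total t 1 with h1 | h1
  · exact le_max_of_le_left h1
  · apply le_max_of_le_right
    rw [le_div_iff₀ (by positivity)]
    have h2 := ENNReal.toReal_mono hK.measure_lt_top.ne
      (ht.trans (measure_mono Set.inter_subset_right))
    rw [ENNReal.toReal_mul, ENNReal.toReal_ofReal hγ.le, ← measureReal_def, ← measureReal_def,
      Measure.addHaar_real_closedBall' volume _ ht0, finrank_euclideanSpace_fin] at h2
    have h3 : t ≤ t ^ n := le_self_pow₀ h1 hn.ne'
    calc t * (γ * b) ≤ t ^ n * (γ * b) := by gcongr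
      _ = γ * (t ^ n * b) := by ring
      _ ≤ _ := h2

/-- **Lower bound on `s_γ` under bounded curvature.** For every `γ ∈ (0,1/2)` there is a
constant `c_γ > 0`, depending only on `γ`, such that for every convex body `K ⊆ ℝⁿ`
whose boundary has curvature bounded above by `C` and every `x ∈ ∂K` one has
`s_γ(x) ≥ c_γ/(C√n)`; equivalently, for `t = c_γ/(C√n)` one has
`vol((x + tBⁿ) ∩ K) ≥ γ vol(tBⁿ)`. -/
theorem sGamma_lower_bound (γ : ℝ) (hγ0 : 0 < γ) (hγ : γ < 1 / 2) :
    ∃ cγ : ℝ, 0 < cγ ∧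
      ∀ (n : ℕ) (K : Set (Euc n)) (C : ℝ),
        IsConvexBody K →
        0 < C → CurvatureBoundedBy K C →
        ∀ x ∈ frontier K,
          cγ / (C * Real.sqrt n) ≤ sGamma K γ x ∧
          ENNReal.ofReal γ *
              volume (closedBall (0 : Euc n) (cγ / (C * Real.sqrt n))) ≤
            volume (closedBall x (cγ / (C * Real.sqrt n)) ∩ K) := by
  obtain ⟨M, hM⟩ := exists_nat_ge (2 / (1 - 2 * γ))
  have hg : 0 < 1 - 2 * γ := by linarith
  have hM2 : 2 ≤ (1 - 2 * γ) * M := by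
    rw [div_le_iff₀ hg] at hM
    linarith
  have hM0 : (0 : ℝ) < M := lt_of_lt_of_le (by positivity) hM
  refine ⟨1 / (2 * M), by positivity, ?_⟩
  intro n K C hK hC hcurv x hx
  -- In dimension zero the frontier of every set is empty.
  have hn : 0 < n := by
    rcases Nat.eq_zero_or_pos n with rfl | h
    · simp at hx
    · exact h
  have hn0 : (0 : ℝ) < n := by exact_mod_cast hn
  have hsq : Real.sqrt n ^ 2 = n := Real.sq_sqrt hn0.le
  have hsq0 : 0 < Real.sqrt n := Real.sqrt_pos.2 hn0
  set t : ℝ := 1 / (2 * M) / (C * Real.sqrt n) with ht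
  have ht0 : 0 < t := by positivity
  have htn : t ^ 2 * (4 * M ^ 2 * C ^ 2 * n) = 1 := by
    rw [ht, div_pow, mul_pow, hsq]
    field_simp
    norm_num
  obtain ⟨z, hz, hxz⟩ := hcurv x hx
  set e : Euc n := C • (z - x) with he
  have hzx : ‖z - x‖ = 1 / C := by rw [← hxz, dist_comm, dist_eq_norm]
  have he1 : ‖e‖ = 1 := by
    rw [he, norm_smul, hzx, Real.norm_eq_abs, abs_of_pos hC]
    field_simp
  -- `d` is the height at which the sphere of radius `t` about `x` meets the boundary
  -- of the inner ball.
  set d : ℝ := C * t ^ 2 / 2 with hd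
  have hd0 : 0 < d := by positivity
  have hdM : 8 * M ^ 2 * n * d ^ 2 ≤ t ^ 2 := by
    have : 8 * M ^ 2 * n * d ^ 2 = t ^ 2 * (t ^ 2 * (4 * M ^ 2 * C ^ 2 * n)) / 2 := by
      rw [hd]; ring
    rw [this, htn]
    nlinarith [sq_nonneg t]
  have hcap := cap_real_ge hn e he1 t d ht0 hd0 M hdM γ hM2
  set P : Set (Euc n) := {u : Euc n | u ∈ closedBall 0 t ∧ d ≤ ⟪e, u⟫_ℝ} with hP
  have hsub : (fun u => x + u) '' P ⊆ closedBall x t ∩ K := by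
    rintro _ ⟨u, ⟨hu, hdu⟩, rfl⟩
    have hut : ‖u‖ ≤ t := by simpa using hu
    refine ⟨by simpa [mem_closedBall, dist_eq_norm] using hut, hz ?_⟩
    rw [mem_closedBall, dist_eq_norm]
    refine le_of_sq_le_sq ?_ (by positivity)
    have e1 : x + u - z = u - (z - x) := by abel
    have e2 : C * ⟪u, z - x⟫_ℝ = ⟪e, u⟫_ℝ := by
      rw [he, real_inner_smul_left, real_inner_comm]
    rw [e1, norm_sub_sq_real, hzx]
    have e3 : t ^ 2 / 2 ≤ ⟪u, z - x⟫_ℝ := by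
      refine le_of_mul_le_mul_left ?_ hC
      rw [e2]
      linarith
    have e4 : ‖u‖ ^ 2 ≤ t ^ 2 := by gcongr
    linarith
  have hBfin : volume (closedBall (0 : Euc n) t) ≠ ∞ := measure_closedBall_lt_top.ne
  have hPfin : volume P ≠ ∞ := measure_ne_top_of_subset (fun u hu => hu.1) hBfin
  have hmain : ENNReal.ofReal γ * volume (closedBall (0 : Euc n) t) ≤
      volume (closedBall x t ∩ K) := by
    calc ENNReal.ofReal γ * volume (closedBall (0 : Euc n) t) ≤ volume P := by
          rw [← ENNReal.toReal_le_toReal (ENNReal.mul_ne_top ENNReal.ofReal_ne_top hBfin) hPfin,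
            ENNReal.toReal_mul, ENNReal.toReal_ofReal hγ0.le]
          exact hcap
      _ = volume ((fun u => x + u) '' P) := by
          rw [Set.image_add_left, measure_preimage_add]
      _ ≤ _ := measure_mono hsub
  exact ⟨le_csSup (bddAbove_sGamma hn K hK.2.1 γ hγ0 x) ⟨ht0.le, hmain⟩, hmain⟩

end
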